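/- Let a > 0 be a real number and define f : ℝ → ℝ by f(x) = (2^x − 1)² / ((2^x − 1)² + a²). Then for every x ≥ log₂(a + 1), the second derivative of f at x is strictly negative: (deriv (deriv f)) x < 0. -/

import Mathlib

/-- For `a > 0` and `f(x) = (2^x − 1)² / ((2^x − 1)² + a²)`, the second derivative of `f`
is strictly negative at every `x ≥ log₂(a + 1)`. -/
theorem stmt_1 (a : ℝ) (ha : 0 < a)
    (f : ℝ → ℝ)
    (hf : ∀ x, f x = ((2 : ℝ) ^ x - 1) ^ 2 / (((2 : ℝ) ^ x - 1) ^ 2 + a ^ 2)) :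
    ∀ x, Real.logb 2 (a + 1) ≤ x → deriv (deriv f) x < 0 := by
  intro x hx
  have hp : ∀ y : ℝ, HasDerivAt (fun y : ℝ => (2 : ℝ) ^ y) ((2 : ℝ) ^ y * Real.log 2) y :=
    fun y => (Real.hasStrictDerivAt_const_rpow (by norm_num) y).hasDerivAt
  have hL : 0 < Real.log 2 := Real.log_pos (by norm_num)
  have hd : ∀ y : ℝ, ((2 : ℝ) ^ y - 1) ^ 2 + a ^ 2 ≠ 0 := fun y => by positivity
  have hfe : f = fun x => ((2 : ℝ) ^ x - 1) ^ 2 / (((2 : ℝ) ^ x - 1) ^ 2 + a ^ 2) := funext hf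
  have h1 : deriv f = fun y => (2 * a ^ 2 * Real.log 2) * (((2 : ℝ) ^ y - 1) * (2 : ℝ) ^ y) /
      (((2 : ℝ) ^ y - 1) ^ 2 + a ^ 2) ^ 2 := by
    funext y
    rw [hfe]
    have hn := ((hp y).sub_const 1).fun_pow 2
    have h := hn.fun_div (hn.add_const (a ^ 2)) (hd y)
    rw [h.deriv]
    congr 1
    push_cast
    ring
  have hn := ((hp x).sub_const 1).fun_pow 2
  have h2 := ((((hp x).sub_const 1).fun_mul (hp x)).const_mul (2 * a ^ 2 * Real.log 2)).fun_div
    ((hn.add_const (a ^ 2)).fun_pow 2) (pow_ne_zero 2 (hd x))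
  rw [h1, h2.deriv]
  have hu : a + 1 ≤ (2 : ℝ) ^ x :=
    (Real.logb_le_iff_le_rpow (by norm_num) (by linarith)).1 hx
  have hd' := hd x
  generalize (2 : ℝ) ^ x = u at *
  generalize Real.log 2 = L at *
  obtain ⟨t, rfl⟩ : ∃ t, u = t + 1 := ⟨u - 1, by ring⟩
  have ht : a ≤ t := by linarith
  have ht0 : 0 < t := by linarith
  have hb : 0 < 2 * t * (t ^ 2 - a ^ 2) + (3 * t ^ 2 - a ^ 2) := by
    have : a ^ 2 ≤ t ^ 2 := by gcongr
    have : 0 ≤ 2 * t * (t ^ 2 - a ^ 2) := mul_nonneg (by linarith) (by linarith)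
    have : 0 < t ^ 2 := by positivity
    linarith
  apply div_neg_of_neg_of_pos _ (by positivity)
  have key : 0 < 2 * a ^ 2 * L ^ 2 * (t + 1) * (t ^ 2 + a ^ 2) *
    (2 * t * (t ^ 2 - a ^ 2) + (3 * t ^ 2 - a ^ 2)) := by positivity
  push_cast
  simp only [add_sub_cancel_right]
  nlinarith [key]
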